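/- arXiv:2309.05585 — 3 statements merged into one kernel-verified Lean document; each statement's English description precedes it below -/
import Mathlib

section
/- Let Ω ⊆ ℝ³ open, ν ≥ 0, and let u : ℝ × Ω → ℝ³ and p : ℝ × Ω → ℝ be smooth with div u(t,·) = 0 on Ω for every t. Then the following are equivalent: (i) (∂ₜu + (u·∇)u − 2ν div D(u) + ∇p)(t,x) × x = 0 for every (t,x) ∈ ℝ × Ω; (ii) for every smooth, compactly supported φ : ℝ³ → ℝ with support contained in Ω and every t, the map t ↦ ∫_Ω φ (u × x) dx is differentiable with derivative ∫_Ω [ −2ν (D(u)∇φ) × x + p (∇φ × x) + (u·∇φ)(u × x) ] dx, where x denotes the position vector. -/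
/-!
The momentum flux `T = -2ν D(u) + p I + u ⊗ u` (`flux`) is a symmetric tensor field, and since
`div u = 0` the Navier–Stokes residual equals `∂ₜu + div T` (`divM_flux`). The integrand of the weak
balance is exactly `(T∇φ) × x` (`cross_flux`). For a symmetric `T`, integrating
`φ (div T) × x` by parts produces `-(T∇φ) × x` only: the term in which the derivative hits the
position vector is the antisymmetric part of `T` (`integral_angular`). On the other hand the time
derivative of `∫ φ (u × x)` is `∫ φ (∂ₜu × x)` by differentiation under the integral sign
(`hasDerivAt_angular`). Hence `∫ φ (residual × x)` is the difference between the actual derivative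
and the one demanded by the weak balance. It vanishes for all test functions `φ` if and only if
the continuous field `residual × x` vanishes on `Ω`, by the fundamental lemma of the calculus of
variations.
-/

open MeasureTheory Real Set Filter Matrix

noncomputable section

/-- The Jacobian matrix of a vector field on Euclidean space. -/
def jac {d : ℕ} (u : EuclideanSpace ℝ (Fin d) → EuclideanSpace ℝ (Fin d))
    (x : EuclideanSpace ℝ (Fin d)) : Matrix (Fin d) (Fin d) ℝ :=
  fun i j => fderiv ℝ u x (EuclideanSpace.single j 1) i

/-- The rate-of-deformation (symmetric gradient) tensor. -/
def defT {d : ℕ} (u : EuclideanSpace ℝ (Fin d) → EuclideanSpace ℝ (Fin d))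
    (x : EuclideanSpace ℝ (Fin d)) : Matrix (Fin d) (Fin d) ℝ :=
  (1/2 : ℝ) • (jac u x + (jac u x)ᵀ)

/-- The divergence of a vector field. -/
def dvg {d : ℕ} (u : EuclideanSpace ℝ (Fin d) → EuclideanSpace ℝ (Fin d))
    (x : EuclideanSpace ℝ (Fin d)) : ℝ :=
  Matrix.trace (jac u x)

/-- The gradient of a scalar field, as a Euclidean vector. -/
def grd {d : ℕ} (φ : EuclideanSpace ℝ (Fin d) → ℝ)
    (x : EuclideanSpace ℝ (Fin d)) : EuclideanSpace ℝ (Fin d) :=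
  (EuclideanSpace.equiv (Fin d) ℝ).symm (fun i => fderiv ℝ φ x (EuclideanSpace.single i 1))

/-- Matrix acting on a Euclidean vector. -/
def matVec {d : ℕ} (A : Matrix (Fin d) (Fin d) ℝ) (v : EuclideanSpace ℝ (Fin d)) :
    EuclideanSpace ℝ (Fin d) :=
  (EuclideanSpace.equiv (Fin d) ℝ).symm (A.mulVec (EuclideanSpace.equiv (Fin d) ℝ v))

/-- Euclidean dot product. -/
def dotp {d : ℕ} (a b : EuclideanSpace ℝ (Fin d)) : ℝ := ∑ i, a i * b i

/-- Frobenius inner product of matrices. -/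
def frob {d : ℕ} (A B : Matrix (Fin d) (Fin d) ℝ) : ℝ := ∑ i, ∑ j, A i j * B i j

/-- Cross product on Euclidean 3-space. -/
def cross (a b : EuclideanSpace ℝ (Fin 3)) : EuclideanSpace ℝ (Fin 3) :=
  (EuclideanSpace.equiv (Fin 3) ℝ).symm
    (crossProduct ((EuclideanSpace.equiv (Fin 3) ℝ) a) ((EuclideanSpace.equiv (Fin 3) ℝ) b))

/-- divergence of the rate-of-deformation tensor: i-th component is ∑ⱼ ∂ⱼ D(u)ᵢⱼ. -/
def divD {d : ℕ} (u : EuclideanSpace ℝ (Fin d) → EuclideanSpace ℝ (Fin d))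
    (x : EuclideanSpace ℝ (Fin d)) : EuclideanSpace ℝ (Fin d) :=
  (EuclideanSpace.equiv (Fin d) ℝ).symm
    (fun i => ∑ j, fderiv ℝ (fun y => defT u y i j) x (EuclideanSpace.single j 1))

/-! ### Coordinates of the vector operations -/

lemma cross_coord (a b : EuclideanSpace ℝ (Fin 3)) (i : Fin 3) :
    cross a b i = a (i + 1) * b (i + 2) - a (i + 2) * b (i + 1) := by
  fin_cases i <;> simp [cross, crossProduct]

lemma matVec_coord {d : ℕ} (A : Matrix (Fin d) (Fin d) ℝ) (v : EuclideanSpace ℝ (Fin d))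
    (i : Fin d) : matVec A v i = ∑ j, A i j * v j := by
  simp [matVec, Matrix.mulVec, dotProduct]

lemma grd_coord {d : ℕ} (φ : EuclideanSpace ℝ (Fin d) → ℝ) (x : EuclideanSpace ℝ (Fin d))
    (i : Fin d) : grd φ x i = fderiv ℝ φ x (EuclideanSpace.single i 1) := by
  simp [grd]

/-- The row-wise divergence of a matrix field: the `i`-th component is `∑ⱼ ∂ⱼ Tᵢⱼ`. -/
def divM {d : ℕ} (T : EuclideanSpace ℝ (Fin d) → Matrix (Fin d) (Fin d) ℝ)
    (x : EuclideanSpace ℝ (Fin d)) : EuclideanSpace ℝ (Fin d) :=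
  (EuclideanSpace.equiv (Fin d) ℝ).symm
    (fun i => ∑ j, fderiv ℝ (fun y => T y i j) x (EuclideanSpace.single j 1))

lemma divM_coord {d : ℕ} (T : EuclideanSpace ℝ (Fin d) → Matrix (Fin d) (Fin d) ℝ)
    (x : EuclideanSpace ℝ (Fin d)) (i : Fin d) :
    divM T x i = ∑ j, fderiv ℝ (fun y => T y i j) x (EuclideanSpace.single j 1) := by
  simp [divM]

lemma divD_coord {d : ℕ} (u : EuclideanSpace ℝ (Fin d) → EuclideanSpace ℝ (Fin d))
    (x : EuclideanSpace ℝ (Fin d)) (i : Fin d) :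
    divD u x i = ∑ j, fderiv ℝ (fun y => defT u y i j) x (EuclideanSpace.single j 1) := by
  simp [divD]

/-- The cross product with a fixed second factor, as a continuous linear map. -/
def crossL (b : EuclideanSpace ℝ (Fin 3)) :
    EuclideanSpace ℝ (Fin 3) →L[ℝ] EuclideanSpace ℝ (Fin 3) :=
  LinearMap.toContinuousLinearMap
    { toFun := fun a => cross a b
      map_add' := fun a a' => by ext i; simp only [cross_coord, PiLp.add_apply]; ring
      map_smul' := fun c a => by
        ext i; simp only [cross_coord, PiLp.smul_apply, smul_eq_mul, RingHom.id_apply]; ring }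

lemma crossL_apply (a b : EuclideanSpace ℝ (Fin 3)) : crossL b a = cross a b := rfl

/-- The `i`-th coordinate functional. -/
def coordL (i : Fin 3) : EuclideanSpace ℝ (Fin 3) →L[ℝ] ℝ := EuclideanSpace.proj i

lemma coordL_apply (i : Fin 3) (x : EuclideanSpace ℝ (Fin 3)) : coordL i x = x i := rfl

lemma continuousOn_cross {X : Type*} [TopologicalSpace X] {s : Set X}
    {f g : X → EuclideanSpace ℝ (Fin 3)} (hf : ContinuousOn f s) (hg : ContinuousOn g s) :
    ContinuousOn (fun x => cross (f x) (g x)) s := by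
  rw [← (EuclideanSpace.equiv (Fin 3) ℝ).comp_continuousOn_iff, continuousOn_pi]
  intro i
  have hf' (i : Fin 3) : ContinuousOn (fun x => f x i) s :=
    (coordL i).continuous.comp_continuousOn hf
  have hg' (i : Fin 3) : ContinuousOn (fun x => g x i) s :=
    (coordL i).continuous.comp_continuousOn hg
  refine (((hf' (i + 1)).mul (hg' (i + 2))).sub ((hf' (i + 2)).mul (hg' (i + 1)))).congr
    fun x _ => ?_
  exact cross_coord (f x) (g x) i

/-! ### Integration against test functions -/

/-- A function continuous on an open set and vanishing off a compact part of it is integrable. -/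
lemma integrable_of_compact_part {F : Type*} [NormedAddCommGroup F]
    {Ω K : Set (EuclideanSpace ℝ (Fin 3))}
    (hΩ : IsOpen Ω) (hK : IsCompact K) (hKΩ : K ⊆ Ω) {G : EuclideanSpace ℝ (Fin 3) → F}
    (hG : ContinuousOn G Ω) (h0 : ∀ x ∉ K, G x = 0) : Integrable G (volume.restrict Ω) := by
  have h1 : IntegrableOn G K := (hG.mono hKΩ).integrableOn_compact hK
  exact h1.of_forall_sdiff_eq_zero hΩ.measurableSet (fun x hx => h0 x hx.2)

lemma integrable_smul_cross {Ω : Set (EuclideanSpace ℝ (Fin 3))} (hΩ : IsOpen Ω)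
    {φ : EuclideanSpace ℝ (Fin 3) → ℝ} (hφ : Continuous φ) (hc : HasCompactSupport φ)
    (hφΩ : tsupport φ ⊆ Ω) {w : EuclideanSpace ℝ (Fin 3) → EuclideanSpace ℝ (Fin 3)}
    (hw : ContinuousOn w Ω) :
    Integrable (fun x => φ x • cross (w x) x) (volume.restrict Ω) := by
  have h : ContinuousOn (fun x => φ x • cross (w x) x) Ω :=
    hφ.continuousOn.smul (continuousOn_cross hw continuousOn_id)
  refine integrable_of_compact_part hΩ hc hφΩ h fun x hx => ?_
  rw [image_eq_zero_of_notMem_tsupport hx, zero_smul]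

lemma contDiff_mul_of_tsupport {Ω : Set (EuclideanSpace ℝ (Fin 3))} (hΩ : IsOpen Ω)
    {φ H : EuclideanSpace ℝ (Fin 3) → ℝ} (hφ : ContDiff ℝ 1 φ) (hφΩ : tsupport φ ⊆ Ω)
    (hH : ContDiffOn ℝ 1 H Ω) : ContDiff ℝ 1 (fun x => φ x * H x) := by
  refine contDiff_iff_contDiffAt.2 fun x => ?_
  by_cases hx : x ∈ tsupport φ
  · exact hφ.contDiffAt.mul (hH.contDiffAt (hΩ.mem_nhds (hφΩ hx)))
  · refine contDiffAt_const (c := (0 : ℝ)) |>.congr_of_eventuallyEq ?_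
    filter_upwards [(isClosed_tsupport φ).isOpen_compl.mem_nhds hx] with y hy
    rw [image_eq_zero_of_notMem_tsupport hy, zero_mul]

lemma fderiv_eq_zero_off_tsupport {φ : EuclideanSpace ℝ (Fin 3) → ℝ}
    {x : EuclideanSpace ℝ (Fin 3)} (hx : x ∉ tsupport φ) : fderiv ℝ φ x = 0 := by
  by_contra h
  exact hx (support_fderiv_subset ℝ h)

/-- A compactly supported derivative integrates to zero, expanded by the product rule. -/
lemma integral_fderiv_mul_eq_zero {Ω : Set (EuclideanSpace ℝ (Fin 3))} (hΩ : IsOpen Ω)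
    {φ H : EuclideanSpace ℝ (Fin 3) → ℝ} (hφ : ContDiff ℝ 1 φ) (hc : HasCompactSupport φ)
    (hφΩ : tsupport φ ⊆ Ω) (hH : ContDiffOn ℝ 1 H Ω) (v : EuclideanSpace ℝ (Fin 3)) :
    Integrable (fun x => fderiv ℝ φ x v * H x + φ x * fderiv ℝ H x v) (volume.restrict Ω) ∧
    ∫ x in Ω, (fderiv ℝ φ x v * H x + φ x * fderiv ℝ H x v) = 0 := by
  have hP := contDiff_mul_of_tsupport hΩ hφ hφΩ hH
  have hPc : HasCompactSupport (fun x => φ x * H x) := hc.mul_right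
  have hP'cont : Continuous (fun x => fderiv ℝ (fun x => φ x * H x) x v) :=
    (hP.continuous_fderiv (by norm_num)).clm_apply continuous_const
  have hP'int : Integrable (fun x => fderiv ℝ (fun x => φ x * H x) x v) :=
    hP'cont.integrable_of_hasCompactSupport (hPc.fderiv_apply ℝ v)
  have hzero : ∫ x, fderiv ℝ (fun x => φ x * H x) x v = 0 := by
    have := integral_mul_fderiv_eq_neg_fderiv_mul_of_integrable (μ := volume)
      (f := fun _ : EuclideanSpace ℝ (Fin 3) => (1 : ℝ)) (g := fun x => φ x * H x) (v := v)
      (by simp) (by simpa using hP'int)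
      (by simpa using hP.continuous.integrable_of_hasCompactSupport hPc)
      (fun x _ => differentiableAt_const _)
      (fun x _ => hP.differentiable (by norm_num) x)
    simpa using this
  have heq : EqOn (fun x => fderiv ℝ (fun x => φ x * H x) x v)
      (fun x => fderiv ℝ φ x v * H x + φ x * fderiv ℝ H x v) Ω := by
    intro x hx
    have h1 := hφ.differentiable (by norm_num) x
    have h2 := (hH.contDiffAt (hΩ.mem_nhds hx)).differentiableAt (by norm_num)
    simp only [fderiv_fun_mul h1 h2, _root_.add_apply, _root_.smul_apply, smul_eq_mul]
    ring
  refine ⟨(integrableOn_congr_fun heq hΩ.measurableSet).1 hP'int.integrableOn, ?_⟩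
  rw [← setIntegral_congr_fun hΩ.measurableSet heq,
    setIntegral_eq_integral_of_forall_compl_eq_zero, hzero]
  intro x hx
  have : x ∉ tsupport (fun x => φ x * H x) := fun h => hx (hφΩ (tsupport_mul_subset_left h))
  simp [fderiv_eq_zero_off_tsupport this]

/-! ### Integration by parts and differentiation in time -/

/-- One component of the angular momentum balance: the divergence theorem applied to the field
`φ (T_{jl} x_k - T_{kl} x_j)`. Differentiating the position vector leaves `φ (T_{jk} - T_{kj})`,
which vanishes by symmetry. -/
lemma integral_moment_eq_zero {Ω : Set (EuclideanSpace ℝ (Fin 3))} (hΩ : IsOpen Ω)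
    {φ : EuclideanSpace ℝ (Fin 3) → ℝ} (hφ : ContDiff ℝ 1 φ) (hc : HasCompactSupport φ)
    (hφΩ : tsupport φ ⊆ Ω) {T : EuclideanSpace ℝ (Fin 3) → Matrix (Fin 3) (Fin 3) ℝ}
    (hT : ∀ i j, ContDiffOn ℝ 1 (fun x => T x i j) Ω) (hsymm : ∀ x i j, T x i j = T x j i)
    (j k : Fin 3) :
    ∫ x in Ω, ((matVec (T x) (grd φ x) j * x k - matVec (T x) (grd φ x) k * x j)
      + φ x * (divM T x j * x k - divM T x k * x j)) = 0 := by
  have hx (k : Fin 3) : ContDiff ℝ 1 (fun x : EuclideanSpace ℝ (Fin 3) => x k) :=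
    (coordL k).contDiff
  have hdx (k : Fin 3) (x v : EuclideanSpace ℝ (Fin 3)) :
      fderiv ℝ (fun x : EuclideanSpace ℝ (Fin 3) => x k) x v = v k := by
    exact congrArg (· v)
      (coordL k).fderiv
  have hH (l : Fin 3) : ContDiffOn ℝ 1 (fun x => T x j l * x k - T x k l * x j) Ω :=
    ((hT j l).mul (hx k).contDiffOn).sub ((hT k l).mul (hx j).contDiffOn)
  have key (l : Fin 3) := integral_fderiv_mul_eq_zero hΩ hφ hc hφΩ (hH l)
    (EuclideanSpace.single l 1)
  have hsum := integral_finsetSum (μ := volume.restrict Ω) Finset.univ (fun l _ => (key l).1)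
  simp only [(key _).2, Finset.sum_const_zero] at hsum
  rw [← hsum]
  refine setIntegral_congr_fun hΩ.measurableSet fun x hxΩ => ?_
  have hd (i l : Fin 3) : DifferentiableAt ℝ (fun x => T x i l) x :=
    ((hT i l).contDiffAt (hΩ.mem_nhds hxΩ)).differentiableAt (by norm_num)
  have hxd (i : Fin 3) : DifferentiableAt ℝ (fun x : EuclideanSpace ℝ (Fin 3) => x i) x :=
    (hx i).differentiable (by norm_num) x
  have hfd (l : Fin 3) : fderiv ℝ (fun x => T x j l * x k - T x k l * x j) x
        (EuclideanSpace.single l 1)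
      = T x j l * (if k = l then (1 : ℝ) else 0) + x k * fderiv ℝ (fun x => T x j l) x
          (EuclideanSpace.single l 1)
        - (T x k l * (if j = l then (1 : ℝ) else 0) + x j * fderiv ℝ (fun x => T x k l) x
          (EuclideanSpace.single l 1)) := by
    rw [fderiv_fun_sub ((hd j l).fun_mul (hxd k)) ((hd k l).fun_mul (hxd j)),
      fderiv_fun_mul (hd j l) (hxd k), fderiv_fun_mul (hd k l) (hxd j)]
    simp [hdx]
  simp only [hfd, matVec_coord, grd_coord, divM_coord]
  have hs := hsymm x j k
  have e : ∑ l, φ x * (T x j l * (if k = l then (1 : ℝ) else 0) - T x k l * (if j = l then (1 : ℝ) else 0))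
      = 0 := by
    simp [← Finset.mul_sum, Finset.sum_sub_distrib, hs]
  refine (add_zero _).symm.trans ((congrArg _ e.symm).trans ?_)
  simp only [Finset.sum_mul, Finset.mul_sum, mul_sub, ← Finset.sum_sub_distrib,
    ← Finset.sum_add_distrib]
  exact Finset.sum_congr rfl fun l _ => by ring

/-- For symmetric `T`, `∫ φ (div T) × x = -∫ (T∇φ) × x`, with no term from the derivative of the
position vector. -/
lemma integral_angular {Ω : Set (EuclideanSpace ℝ (Fin 3))} (hΩ : IsOpen Ω)
    {φ : EuclideanSpace ℝ (Fin 3) → ℝ} (hφ : ContDiff ℝ 1 φ) (hc : HasCompactSupport φ)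
    (hφΩ : tsupport φ ⊆ Ω) {T : EuclideanSpace ℝ (Fin 3) → Matrix (Fin 3) (Fin 3) ℝ}
    (hT : ∀ i j, ContDiffOn ℝ 1 (fun x => T x i j) Ω) (hsymm : ∀ x i j, T x i j = T x j i) :
    Integrable (fun x => cross (matVec (T x) (grd φ x)) x) (volume.restrict Ω) ∧
    ContinuousOn (divM T) Ω ∧
    ∫ x in Ω, (cross (matVec (T x) (grd φ x)) x + φ x • cross (divM T x) x) = 0 := by
  have hdc : ContinuousOn (divM T) Ω := by
    rw [← (EuclideanSpace.equiv (Fin 3) ℝ).comp_continuousOn_iff, continuousOn_pi]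
    intro i
    change ContinuousOn (fun x => divM T x i) Ω
    simp only [divM_coord]
    exact continuousOn_finsetSum _ fun j _ =>
      ((hT i j).continuousOn_fderiv_of_isOpen hΩ le_rfl).clm_apply continuousOn_const
  have hmc : ContinuousOn (fun x => matVec (T x) (grd φ x)) Ω := by
    rw [← (EuclideanSpace.equiv (Fin 3) ℝ).comp_continuousOn_iff, continuousOn_pi]
    intro i
    change ContinuousOn (fun x => matVec (T x) (grd φ x) i) Ω
    simp only [matVec_coord, grd_coord]
    exact continuousOn_finsetSum _ fun j _ => (hT i j).continuousOn.mul
      ((hφ.continuous_fderiv (by norm_num)).clm_apply continuous_const).continuousOn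
  have i1 : Integrable (fun x => cross (matVec (T x) (grd φ x)) x) (volume.restrict Ω) := by
    refine integrable_of_compact_part hΩ hc hφΩ
      (continuousOn_cross hmc continuousOn_id) fun x hx => ?_
    ext i
    simp [cross_coord, matVec_coord, grd_coord, fderiv_eq_zero_off_tsupport hx]
  have i2 : Integrable (fun x => φ x • cross (divM T x) x) (volume.restrict Ω) :=
    integrable_smul_cross hΩ hφ.continuous hc hφΩ hdc
  refine ⟨i1, hdc, ?_⟩
  ext i
  have := (coordL i).integral_comp_comm
    (i1.add i2)
  have h2 := integral_moment_eq_zero hΩ hφ hc hφΩ hT hsymm (i + 1) (i + 2)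
  refine (this.symm.trans ?_)
  simpa [coordL_apply, cross_coord] using h2

/-- Differentiation under the integral sign: for a test function the local angular momentum is
differentiable in time. -/
lemma hasDerivAt_angular {Ω : Set (EuclideanSpace ℝ (Fin 3))} (hΩ : IsOpen Ω)
    {u : ℝ → EuclideanSpace ℝ (Fin 3) → EuclideanSpace ℝ (Fin 3)}
    (hu : ContDiffOn ℝ (⊤ : ℕ∞) (Function.uncurry u) (Set.univ ×ˢ Ω))
    {φ : EuclideanSpace ℝ (Fin 3) → ℝ} (hφ : Continuous φ) (hc : HasCompactSupport φ)
    (hφΩ : tsupport φ ⊆ Ω) (t : ℝ) :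
    ContinuousOn (fun x => deriv (fun s => u s x) t) Ω ∧
    Integrable (fun x => φ x • cross (deriv (fun s => u s x) t) x) (volume.restrict Ω) ∧
    HasDerivAt (fun s => ∫ x in Ω, φ x • cross (u s x) x)
      (∫ x in Ω, φ x • cross (deriv (fun s => u s x) t) x) t := by
  have hopen : IsOpen ((Set.univ : Set ℝ) ×ˢ Ω) := isOpen_univ.prod hΩ
  have hdiff (s : ℝ) {x : EuclideanSpace ℝ (Fin 3)} (hx : x ∈ Ω) :
      HasDerivAt (fun s => u s x) (fderiv ℝ (Function.uncurry u) (s, x) (1, 0)) s := by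
    have h1 : HasFDerivAt (Function.uncurry u) (fderiv ℝ (Function.uncurry u) (s, x)) (s, x) :=
      ((hu.contDiffAt (hopen.mem_nhds ⟨mem_univ _, hx⟩)).differentiableAt (by simp)).hasFDerivAt
    have h2 : HasDerivAt (fun s : ℝ => (s, x)) ((1 : ℝ), (0 : EuclideanSpace ℝ (Fin 3))) s :=
      (hasDerivAt_id s).prodMk (hasDerivAt_const s x)
    exact h1.comp_hasDerivAt s h2
  have hcont : ContinuousOn (fun q : ℝ × EuclideanSpace ℝ (Fin 3) =>
      deriv (fun s => u s q.2) q.1) (Set.univ ×ˢ Ω) :=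
    ((hu.continuousOn_fderiv_of_isOpen hopen (by simp)).clm_apply
      continuousOn_const).congr fun q hq => (hdiff q.1 hq.2).deriv
  have hslice (s : ℝ) : ContinuousOn (fun x => (s, x)) Ω := by fun_prop
  have hmaps (s : ℝ) : MapsTo (fun x => (s, x)) Ω ((Set.univ : Set ℝ) ×ˢ Ω) :=
    fun x hx => ⟨mem_univ _, hx⟩
  have hct (s : ℝ) : ContinuousOn (fun x => deriv (fun s => u s x) s) Ω :=
    hcont.comp (hslice s) (hmaps s)
  have huc (s : ℝ) : ContinuousOn (u s) Ω := hu.continuousOn.comp (hslice s) (hmaps s)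
  have hint {w : EuclideanSpace ℝ (Fin 3) → EuclideanSpace ℝ (Fin 3)} (hw : ContinuousOn w Ω) :
      Integrable (fun x => φ x • cross (w x) x) (volume.restrict Ω) :=
    integrable_smul_cross hΩ hφ hc hφΩ hw
  have hK : IsCompact (Metric.closedBall t 1 ×ˢ tsupport φ) :=
    (isCompact_closedBall t 1).prod hc
  have hgc : ContinuousOn (fun q : ℝ × EuclideanSpace ℝ (Fin 3) =>
      φ q.2 • cross (deriv (fun s => u s q.2) q.1) q.2) (Metric.closedBall t 1 ×ˢ tsupport φ) :=
    (hφ.comp continuous_snd).continuousOn.smul (continuousOn_cross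
      (hcont.mono (prod_mono (subset_univ _) hφΩ)) continuousOn_snd)
  obtain ⟨C, hC⟩ := hK.exists_bound_of_continuousOn hgc
  refine ⟨hct t, hint (hct t), ?_⟩
  refine (hasDerivAt_integral_of_dominated_loc_of_deriv_le
    (F' := fun s x => φ x • cross (deriv (fun s => u s x) s) x)
    (bound := (tsupport φ).indicator fun _ => C)
    (Metric.ball_mem_nhds t one_pos) (Eventually.of_forall fun s => (hint (huc s)).1)
    (hint (huc t)) (hint (hct t)).1 ?_ ?_ ?_).2
  · refine Eventually.of_forall fun x s hs => ?_
    by_cases hx : x ∈ tsupport φ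
    · rw [indicator_of_mem hx]
      exact hC (s, x) ⟨Metric.ball_subset_closedBall hs, hx⟩
    · simp [indicator_of_notMem hx, image_eq_zero_of_notMem_tsupport hx]
  · refine Integrable.mono_measure ?_ Measure.restrict_le_self
    rw [integrable_indicator_iff (isClosed_tsupport φ).measurableSet]
    exact integrableOn_const hc.measure_lt_top.ne
  · filter_upwards [ae_restrict_mem hΩ.measurableSet] with x hx s _
    have := (crossL x).hasFDerivAt.comp_hasDerivAt s (hdiff s hx)
    rw [← (hdiff s hx).deriv] at this
    exact this.const_smul (φ x)

/-! ### The momentum flux and the equivalence -/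

/-- The momentum flux tensor `-2ν D(u) + p I + u ⊗ u`. -/
def flux (ν : ℝ) (u : EuclideanSpace ℝ (Fin 3) → EuclideanSpace ℝ (Fin 3))
    (p : EuclideanSpace ℝ (Fin 3) → ℝ) (x : EuclideanSpace ℝ (Fin 3)) :
    Matrix (Fin 3) (Fin 3) ℝ :=
  fun i j => -(2 * ν) * defT u x i j + p x * (if i = j then 1 else 0) + u x i * u x j

lemma flux_symm (ν : ℝ) (u : EuclideanSpace ℝ (Fin 3) → EuclideanSpace ℝ (Fin 3))
    (p : EuclideanSpace ℝ (Fin 3) → ℝ) (x : EuclideanSpace ℝ (Fin 3)) (i j : Fin 3) :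
    flux ν u p x i j = flux ν u p x j i := by
  simp only [flux, defT, Matrix.smul_apply, Matrix.add_apply, Matrix.transpose_apply,
    smul_eq_mul, eq_comm (a := i) (b := j)]
  ring

lemma cross_flux (ν : ℝ) (u : EuclideanSpace ℝ (Fin 3) → EuclideanSpace ℝ (Fin 3))
    (p : EuclideanSpace ℝ (Fin 3) → ℝ) (x g : EuclideanSpace ℝ (Fin 3)) :
    cross (matVec (flux ν u p x) g) x
      = (-(2 * ν)) • cross (matVec (defT u x) g) x + p x • cross g x
        + dotp (u x) g • cross (u x) x := by
  have h : matVec (flux ν u p x) g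
      = (-(2 * ν)) • matVec (defT u x) g + p x • g + dotp (u x) g • u x := by
    ext i
    simp only [matVec_coord, flux, PiLp.add_apply, PiLp.smul_apply, smul_eq_mul, dotp,
      Fin.sum_univ_three]
    fin_cases i <;> simp <;> ring
  simp only [← crossL_apply, h, map_add, map_smul]

lemma contDiffOn_coord {F : Type*} [NormedAddCommGroup F] [NormedSpace ℝ F] {s : Set F} {n : WithTop ℕ∞}
    {w : F → EuclideanSpace ℝ (Fin 3)} (hw : ContDiffOn ℝ n w s) (i : Fin 3) :
    ContDiffOn ℝ n (fun x => w x i) s :=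
  (coordL i).contDiff.comp_contDiffOn hw

lemma contDiffOn_defT {Ω : Set (EuclideanSpace ℝ (Fin 3))} (hΩ : IsOpen Ω)
    {u : EuclideanSpace ℝ (Fin 3) → EuclideanSpace ℝ (Fin 3)}
    (hu : ContDiffOn ℝ 2 u Ω) (i j : Fin 3) : ContDiffOn ℝ 1 (fun x => defT u x i j) Ω := by
  have h : ContDiffOn ℝ 1 (fderiv ℝ u) Ω := hu.fderiv_of_isOpen hΩ (by norm_num)
  have hj (i j : Fin 3) : ContDiffOn ℝ 1 (fun x => jac u x i j) Ω :=
    contDiffOn_coord (h.clm_apply contDiffOn_const) i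
  exact ((hj i j).add (hj j i)).const_smul (1 / 2 : ℝ)

lemma contDiffOn_flux {Ω : Set (EuclideanSpace ℝ (Fin 3))} (hΩ : IsOpen Ω) (ν : ℝ)
    {u : EuclideanSpace ℝ (Fin 3) → EuclideanSpace ℝ (Fin 3)}
    {p : EuclideanSpace ℝ (Fin 3) → ℝ}
    (hu : ContDiffOn ℝ 2 u Ω) (hp : ContDiffOn ℝ 1 p Ω) (i j : Fin 3) :
    ContDiffOn ℝ 1 (fun x => flux ν u p x i j) Ω := by
  have h1 : ContDiffOn ℝ 1 u Ω := hu.of_le (by norm_num)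
  exact ((contDiffOn_const.mul (contDiffOn_defT hΩ hu i j)).add (hp.mul contDiffOn_const)).add
    ((contDiffOn_coord h1 i).mul (contDiffOn_coord h1 j))

/-- For a divergence-free field `div (u ⊗ u) = (u·∇)u`, so the divergence of the momentum flux is
the spatial part of the Navier–Stokes operator. -/
lemma divM_flux {Ω : Set (EuclideanSpace ℝ (Fin 3))} (hΩ : IsOpen Ω) (ν : ℝ)
    {u : EuclideanSpace ℝ (Fin 3) → EuclideanSpace ℝ (Fin 3)}
    {p : EuclideanSpace ℝ (Fin 3) → ℝ}
    (hu : ContDiffOn ℝ 2 u Ω) (hp : ContDiffOn ℝ 1 p Ω) {x : EuclideanSpace ℝ (Fin 3)}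
    (hx : x ∈ Ω) (hdiv : dvg u x = 0) :
    divM (flux ν u p) x = fderiv ℝ u x (u x) - (2 * ν) • divD u x + grd p x := by
  have hud : DifferentiableAt ℝ u x :=
    (hu.contDiffAt (hΩ.mem_nhds hx)).differentiableAt (by norm_num)
  have hpd : DifferentiableAt ℝ p x :=
    (hp.contDiffAt (hΩ.mem_nhds hx)).differentiableAt (by norm_num)
  have hDd (i j : Fin 3) : DifferentiableAt ℝ (fun y => defT u y i j) x :=
    ((contDiffOn_defT hΩ hu i j).contDiffAt (hΩ.mem_nhds hx)).differentiableAt (by norm_num)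
  have hc (i : Fin 3) : HasFDerivAt (fun y => u y i)
      ((coordL i).comp (fderiv ℝ u x)) x :=
    (coordL i).hasFDerivAt.comp x
      hud.hasFDerivAt
  have hf (i j : Fin 3) (v : EuclideanSpace ℝ (Fin 3)) :
      fderiv ℝ (fun y => flux ν u p y i j) x v
        = -(2 * ν) * fderiv ℝ (fun y => defT u y i j) x v
          + fderiv ℝ p x v * (if i = j then 1 else 0)
          + (u x i * fderiv ℝ u x v j + u x j * fderiv ℝ u x v i) := by
    have := (((hDd i j).hasFDerivAt.const_mul (-(2 * ν))).add
      (hpd.hasFDerivAt.mul_const (if i = j then (1 : ℝ) else 0))).add ((hc i).mul (hc j))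
    rw [show fderiv ℝ (fun y => flux ν u p y i j) x = _ from this.fderiv]
    simp only [_root_.add_apply, _root_.smul_apply, smul_eq_mul, ContinuousLinearMap.comp_apply,
      coordL_apply]
    ring
  have hconv (i : Fin 3) : fderiv ℝ u x (u x) i
      = ∑ j, u x j * fderiv ℝ u x (EuclideanSpace.single j 1) i := by
    have hb : u x = ∑ j, u x j • EuclideanSpace.single j (1 : ℝ) := by
      ext i
      simp [Pi.single_apply]
    conv_lhs => rw [hb]
    simp
  have hdiv' : ∑ j, fderiv ℝ u x (EuclideanSpace.single j 1) j = 0 := hdiv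
  ext i
  simp only [divM_coord, hf, PiLp.add_apply, PiLp.sub_apply, PiLp.smul_apply, smul_eq_mul,
    hconv, grd_coord, divD_coord, Finset.sum_add_distrib, ← Finset.mul_sum, hdiv']
  simp
  ring

/-- For smooth divergence-free `u`, `p` on `ℝ × Ω ⊆ ℝ × ℝ³` (`Ω` open), the
cross product of the Navier–Stokes momentum equation with the position vector vanishes on
`ℝ × Ω` iff for every smooth compactly supported `φ` with support in `Ω`, the weak
(diffuse-volume) Eulerian local angular momentum balance holds. -/
theorem weak_eulerian_angular_momentum_equivalence
    (Ω : Set (EuclideanSpace ℝ (Fin 3))) (hΩ : IsOpen Ω) (ν : ℝ) (hν : 0 ≤ ν)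
    (u : ℝ → EuclideanSpace ℝ (Fin 3) → EuclideanSpace ℝ (Fin 3))
    (p : ℝ → EuclideanSpace ℝ (Fin 3) → ℝ)
    (hu : ContDiffOn ℝ (⊤ : ℕ∞) (Function.uncurry u) (Set.univ ×ˢ Ω))
    (hp : ContDiffOn ℝ (⊤ : ℕ∞) (Function.uncurry p) (Set.univ ×ˢ Ω))
    (hdiv : ∀ t, ∀ x ∈ Ω, dvg (u t) x = 0) :
    (∀ (t : ℝ), ∀ x ∈ Ω,
        cross (deriv (fun s => u s x) t + fderiv ℝ (u t) x (u t x)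
          - (2 * ν) • divD (u t) x + grd (p t) x) x = 0)
    ↔ (∀ φ : EuclideanSpace ℝ (Fin 3) → ℝ, ContDiff ℝ (⊤ : ℕ∞) φ → HasCompactSupport φ →
        tsupport φ ⊆ Ω → ∀ t : ℝ,
        HasDerivAt (fun s => ∫ x in Ω, φ x • cross (u s x) x)
          (∫ x in Ω, ((-(2 * ν)) • cross (matVec (defT (u t) x) (grd φ x)) x
            + p t x • cross (grd φ x) x
            + dotp (u t x) (grd φ x) • cross (u t x) x)) t) := by
  have hu2 (t : ℝ) : ContDiffOn ℝ 2 (u t) Ω :=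
    (hu.of_le (WithTop.coe_le_coe.2 (le_top : (2 : ℕ∞) ≤ ⊤))).comp (contDiff_prodMk_right t).contDiffOn
      fun x hx => ⟨mem_univ _, hx⟩
  have hp1 (t : ℝ) : ContDiffOn ℝ 1 (p t) Ω :=
    (hp.of_le (by exact_mod_cast (le_top : (1 : ℕ∞) ≤ ⊤))).comp (contDiff_prodMk_right t).contDiffOn
      fun x hx => ⟨mem_univ _, hx⟩
  have hE (t : ℝ) (x : EuclideanSpace ℝ (Fin 3)) (hx : x ∈ Ω) :
      deriv (fun s => u s x) t + fderiv ℝ (u t) x (u t x)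
          - (2 * ν) • divD (u t) x + grd (p t) x
        = deriv (fun s => u s x) t + divM (flux ν (u t) (p t)) x := by
    rw [divM_flux hΩ ν (hu2 t) (hp1 t) hx (hdiv t x hx)]
    abel
  -- testing the residual against `φ` measures the defect in the weak balance
  have key (φ : EuclideanSpace ℝ (Fin 3) → ℝ) (hφ : ContDiff ℝ (⊤ : ℕ∞) φ)
      (hc : HasCompactSupport φ) (hφΩ : tsupport φ ⊆ Ω) (t : ℝ) :
      ∫ x in Ω, φ x • cross (deriv (fun s => u s x) t + divM (flux ν (u t) (p t)) x) x
        = (∫ x in Ω, φ x • cross (deriv (fun s => u s x) t) x)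
          - ∫ x in Ω, cross (matVec (flux ν (u t) (p t) x) (grd φ x)) x := by
    have hφ1 : ContDiff ℝ 1 φ := hφ.of_le (by exact_mod_cast (le_top : (1 : ℕ∞) ≤ ⊤))
    obtain ⟨i1, hdc, h0⟩ := integral_angular hΩ hφ1 hc hφΩ
      (contDiffOn_flux hΩ ν (hu2 t) (hp1 t)) (flux_symm ν (u t) (p t))
    obtain ⟨-, i3, -⟩ := hasDerivAt_angular hΩ hu hφ1.continuous hc hφΩ t
    have i2 : Integrable (fun x => φ x • cross (divM (flux ν (u t) (p t)) x) x)
        (volume.restrict Ω) := integrable_smul_cross hΩ hφ1.continuous hc hφΩ hdc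
    rw [integral_add i1 i2] at h0
    simp only [← crossL_apply, map_add, smul_add] at i1 i2 i3 h0 ⊢
    rw [integral_add i3 i2, eq_neg_of_add_eq_zero_right h0, sub_eq_add_neg]
  simp only [← cross_flux]
  constructor
  · intro h φ hφ hc hφΩ t
    have h0 := key φ hφ hc hφΩ t
    rw [setIntegral_eq_zero_of_forall_eq_zero fun x hx => by
      rw [← hE t x hx, h t x hx, smul_zero]] at h0
    rw [← sub_eq_zero.1 h0.symm]
    exact (hasDerivAt_angular hΩ hu hφ.continuous hc hφΩ t).2.2
  · intro h t x hx
    rw [hE t x hx]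
    have hdc : ContinuousOn (divM (flux ν (u t) (p t))) Ω :=
      (integral_angular (φ := fun _ => 0) hΩ contDiff_const HasCompactSupport.zero
        (by simp [tsupport]) (contDiffOn_flux hΩ ν (hu2 t) (hp1 t))
        (flux_symm ν (u t) (p t))).2.1
    have htc : ContinuousOn (fun x => deriv (fun s => u s x) t) Ω :=
      (hasDerivAt_angular (φ := fun _ => 0) hΩ hu continuous_const HasCompactSupport.zero
        (by simp [tsupport]) t).1
    have hcont : ContinuousOn (fun x => cross (deriv (fun s => u s x) t
        + divM (flux ν (u t) (p t)) x) x) Ω :=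
      continuousOn_cross (htc.add hdc) continuousOn_id
    have hae := hΩ.ae_eq_zero_of_integral_contDiff_smul_eq_zero (μ := volume)
      (hcont.locallyIntegrableOn hΩ.measurableSet) fun φ hφ hc hφΩ => by
        have h1 := (hasDerivAt_angular hΩ hu hφ.continuous hc hφΩ t).2.2.unique
          (h φ hφ hc hφΩ t)
        rw [← setIntegral_eq_integral_of_forall_compl_eq_zero (s := Ω), key φ hφ hc hφΩ t, h1,
          sub_self]
        intro x hx
        rw [image_eq_zero_of_notMem_tsupport fun hx' => hx (hφΩ hx'), zero_smul]
    exact Measure.eqOn_open_of_ae_eq ((ae_restrict_iff' hΩ.measurableSet).2 hae) hΩ hcont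
      continuousOn_const hx

end
end

section
/- Let d ≥ 1, ν ≥ 0. Let u : ℝ × ℝ^d → ℝ^d be C¹ and p̂ : ℝ × ℝ^d → ℝ be continuous, and let φ : ℝ^d → ℝ be C¹ with compact support. Assume that at every time t and for every constant vector c ∈ ℝ^d, the EMAC variational identity ∫_{ℝ^d} [ ∂ₜu·v + 2(D(u)u)·v + (div u)(u·v) + 2ν ⟨D(u), D(v)⟩_F − p̂ (div v) ] dx = 0 holds with the test field v(x) = φ(x) c. Then, setting p = p̂ + ½‖u‖², for every t the map t ↦ ∫_{ℝ^d} φ u dx is differentiable with derivative ∫_{ℝ^d} [ −2ν D(u)∇φ + p ∇φ + (u·∇φ) u ] dx. In particular the weak (diffuse-volume) Eulerian local momentum balance holds even when div u is not zero. -/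
/-!
Tested against `v = φ eₖ`, the EMAC integrand equals, pointwise,
`φ ∂ₜuₖ - [-2ν D(u)∇φ + p ∇φ + (u·∇φ) u]ₖ + ∑ⱼ [∂ⱼ(φ uⱼ uₖ) + ½ ∂ₖ(φ uⱼ²)]`
(`emac_integrand_eq`): the identity `2 D(u) u + (div u) u = ∇·(u ⊗ u) + ½ ∇‖u‖²` holds without any
constraint on `div u`, and the `½ ∇‖u‖²` part turns `p̂` into `p`. The last sum consists of
derivatives of compactly supported `C¹` functions, so its integral vanishes
(`integrable_and_integral_exactDiv`). The EMAC identity therefore says that `∫ φ ∂ₜu` is the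
claimed right-hand side, and `∫ φ ∂ₜu` is the time derivative of `∫ φ u` by dominated
differentiation under the integral sign (`hasDerivAt_integral_smul`).
-/

open MeasureTheory Real Set Filter Matrix

noncomputable section

section helpers

variable {d : ℕ}

local notation "E" => EuclideanSpace ℝ (Fin d)

/-- A directional derivative of a compactly supported `C¹` function is integrable. -/
lemma integrable_fderiv_apply {g : E → ℝ} (hg : ContDiff ℝ 1 g) (hc : HasCompactSupport g)
    (v : E) : Integrable (fun x => fderiv ℝ g x v) :=
  ((hg.continuous_fderiv one_ne_zero).clm_apply continuous_const).integrable_of_hasCompactSupport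
    (hc.fderiv_apply ℝ v)

/-- There is no boundary term: a directional derivative of a compactly supported `C¹` function
integrates to zero. -/
lemma integral_fderiv_apply_eq_zero {g : E → ℝ} (hg : ContDiff ℝ 1 g)
    (hc : HasCompactSupport g) (v : E) : ∫ x, fderiv ℝ g x v = 0 := by
  -- integration by parts against the constant function `1`
  have h := integral_mul_fderiv_eq_neg_fderiv_mul_of_integrable (μ := (volume : Measure E))
    (f := fun _ : E => (1 : ℝ)) (g := g) (v := v) (by simp)
    (by simpa using integrable_fderiv_apply hg hc v)
    (by simpa using hg.continuous.integrable_of_hasCompactSupport hc)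
    (fun x _ => differentiableAt_const _)
    (fun x _ => (hg.differentiable one_ne_zero) x)
  simpa using h

lemma fderiv_coord {w : E → E} (hw : ContDiff ℝ 1 w) (i : Fin d) (x v : E) :
    fderiv ℝ (fun y => w y i) x v = fderiv ℝ w x v i := by
  have h := ((EuclideanSpace.proj (𝕜 := ℝ) i).hasFDerivAt (x := w x)).comp x
    ((hw.differentiable one_ne_zero) x).hasFDerivAt
  exact congrArg (fun L : E →L[ℝ] ℝ => L v) h.fderiv

lemma contDiff_coord {w : E → E} (hw : ContDiff ℝ 1 w) (i : Fin d) :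
    ContDiff ℝ 1 (fun y => w y i) :=
  (EuclideanSpace.proj i : E →L[ℝ] ℝ).contDiff.comp hw

lemma continuous_jac {w : E → E} (hw : ContDiff ℝ 1 w) (i j : Fin d) :
    Continuous (fun x => jac w x i j) := by
  have := ((hw.continuous_fderiv one_ne_zero).clm_apply
    (continuous_const (y := EuclideanSpace.single j (1 : ℝ))))
  exact (EuclideanSpace.proj i : E →L[ℝ] ℝ).continuous.comp this

lemma grd_apply (φ : E → ℝ) (x : E) (i : Fin d) :
    grd φ x i = fderiv ℝ φ x (EuclideanSpace.single i 1) := rfl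

lemma matVec_apply (A : Matrix (Fin d) (Fin d) ℝ) (v : E) (i : Fin d) :
    matVec A v i = ∑ j, A i j * v j := rfl

lemma continuous_grd {φ : E → ℝ} (hφ : ContDiff ℝ 1 φ) (i : Fin d) :
    Continuous (fun x => grd φ x i) :=
  (hφ.continuous_fderiv one_ne_zero).clm_apply continuous_const

lemma grd_eq_zero {φ : E → ℝ} {x : E} (hx : x ∉ tsupport φ) : grd φ x = 0 := by
  ext i
  rw [grd_apply, fderiv_of_notMem_tsupport ℝ hx]; rfl

lemma jac_smul_single {φ : E → ℝ} (hφ : ContDiff ℝ 1 φ) (k : Fin d) (x : E) (i j : Fin d) :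
    jac (fun y => φ y • EuclideanSpace.single k (1 : ℝ)) x i j
      = if i = k then grd φ x j else 0 := by
  have h := ((hφ.differentiable one_ne_zero) x).hasFDerivAt.smul_const
    (EuclideanSpace.single k (1 : ℝ))
  simp [jac, h.fderiv, grd_apply]

lemma dotp_smul_single (a : E) (r : ℝ) (k : Fin d) :
    dotp a (r • EuclideanSpace.single k (1 : ℝ)) = r * a k := by
  simp [dotp, mul_comm]

lemma dvg_smul_single {φ : E → ℝ} (hφ : ContDiff ℝ 1 φ) (k : Fin d) (x : E) :
    dvg (fun y => φ y • EuclideanSpace.single k (1 : ℝ)) x = grd φ x k := by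
  simp [dvg, Matrix.trace, jac_smul_single hφ]

/-- By symmetry of `D(u)`, its Frobenius product with `D(φ eₖ)` only sees `∇(φ eₖ) = eₖ ⊗ ∇φ`
and equals the `k`-th component of `D(u)∇φ`. -/
lemma frob_defT_smul_single {φ : E → ℝ} (hφ : ContDiff ℝ 1 φ) (w : E → E) (k : Fin d) (x : E) :
    frob (defT w x) (defT (fun y => φ y • EuclideanSpace.single k (1 : ℝ)) x)
      = matVec (defT w x) (grd φ x) k := by
  have hs : ∀ i j, defT w x i j = defT w x j i := by
    intro i j; simp [defT, add_comm]
  have h1 : frob (defT w x) (defT (fun y => φ y • EuclideanSpace.single k (1 : ℝ)) x)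
      = ∑ i, ∑ j, ((if i = k then defT w x i j * grd φ x j / 2 else 0)
        + (if j = k then defT w x i j * grd φ x i / 2 else 0)) := by
    unfold frob
    refine Finset.sum_congr rfl fun i _ => Finset.sum_congr rfl fun j _ => ?_
    have : defT (fun y => φ y • EuclideanSpace.single k (1 : ℝ)) x i j
        = 1 / 2 * ((if i = k then grd φ x j else 0) + (if j = k then grd φ x i else 0)) := by
      simp only [defT, Matrix.smul_apply, Matrix.add_apply, Matrix.transpose_apply,
        jac_smul_single hφ, smul_eq_mul]
    rw [this]
    split_ifs <;> ring
  rw [h1, matVec_apply]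
  simp only [Finset.sum_add_distrib]
  rw [Finset.sum_comm]
  simp only [Finset.sum_ite_eq', Finset.mem_univ, if_true]
  rw [← Finset.sum_add_distrib]
  refine Finset.sum_congr rfl fun j _ => ?_
  rw [hs j k]; ring

/-- The product rule for `∂ⱼ(φ wᵢ wₖ)`. The convective terms of EMAC combine the derivatives with
`j = i` and those with `i = k`. -/
lemma fderiv_flux {φ : E → ℝ} {w : E → E} (hφ : ContDiff ℝ 1 φ) (hw : ContDiff ℝ 1 w)
    (i k j : Fin d) (x : E) :
    fderiv ℝ (fun y => φ y * (w y i * w y k)) x (EuclideanSpace.single j 1)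
      = φ x * (w x i * jac w x k j + w x k * jac w x i j) + w x i * w x k * grd φ x j := by
  have hd : ∀ i, DifferentiableAt ℝ (fun y => w y i) x := fun i =>
    ((contDiff_coord hw i).differentiable one_ne_zero) x
  rw [fderiv_fun_mul ((hφ.differentiable one_ne_zero) x) ((hd i).fun_mul (hd k)),
    fderiv_fun_mul (hd i) (hd k)]
  simp only [_root_.add_apply, _root_.smul_apply, smul_eq_mul,
    fderiv_coord hw]
  rfl

lemma contDiff_flux {φ : E → ℝ} {w : E → E} (hφ : ContDiff ℝ 1 φ) (hw : ContDiff ℝ 1 w)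
    (i k : Fin d) : ContDiff ℝ 1 (fun y => φ y * (w y i * w y k)) :=
  hφ.mul ((contDiff_coord hw i).mul (contDiff_coord hw k))

/-- The integrand on the right-hand side of the momentum balance, with `q` in the role of the
modified pressure `p̂`. -/
def balanceFlux (ν : ℝ) (w : E → E) (q φ : E → ℝ) (x : E) : E :=
  (-(2 * ν)) • matVec (defT w x) (grd φ x)
    + (q x + (1/2) * ‖w x‖ ^ 2) • grd φ x
    + dotp (w x) (grd φ x) • w x

lemma balanceFlux_apply (ν : ℝ) (w : E → E) (q φ : E → ℝ) (x : E) (k : Fin d) :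
    balanceFlux ν w q φ x k = -(2 * ν) * (∑ j, defT w x k j * grd φ x j)
      + (q x + (1/2) * ‖w x‖ ^ 2) * grd φ x k
      + (∑ j, w x j * grd φ x j) * w x k := rfl

lemma integrable_balanceFlux (ν : ℝ) {w : E → E} {q φ : E → ℝ} (hw : ContDiff ℝ 1 w)
    (hq : Continuous q) (hφ : ContDiff ℝ 1 φ) (hφc : HasCompactSupport φ) :
    Integrable (balanceFlux ν w q φ) := by
  refine Continuous.integrable_of_hasCompactSupport ?_ ?_
  · refine (PiLp.continuous_toLp 2 (fun _ : Fin d => ℝ)).comp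
      (continuous_pi (f := fun x k => balanceFlux ν w q φ x k) fun k => ?_)
    have h1 : ∀ i j, Continuous fun x => defT w x i j := fun i j =>
      ((continuous_jac hw i j).add (continuous_jac hw j i)).const_smul (1 / 2 : ℝ)
    have h2 := fun i => continuous_grd hφ i
    have h3 := fun i => (contDiff_coord hw i).continuous
    have h4 := hw.continuous.norm
    simp only [balanceFlux_apply]
    exact ((continuous_const.mul (continuous_finsetSum _ fun j _ => (h1 k j).mul (h2 j))).add
      ((hq.add (continuous_const.mul (h4.pow 2))).mul (h2 k))).add
      ((continuous_finsetSum _ fun j _ => (h3 j).mul (h2 j)).mul (h3 k))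
  · refine HasCompactSupport.intro hφc fun x hx => ?_
    ext k
    simp [balanceFlux_apply, grd_eq_zero hx]

/-- The exact divergence `∑ⱼ [∂ⱼ(φ wⱼ wₖ) + ½ ∂ₖ(φ wⱼ²)]`. -/
def exactDiv (w : E → E) (φ : E → ℝ) (k : Fin d) (x : E) : ℝ :=
  ∑ j, (fderiv ℝ (fun y => φ y * (w y j * w y k)) x (EuclideanSpace.single j 1)
    + 1 / 2 * fderiv ℝ (fun y => φ y * (w y j * w y j)) x (EuclideanSpace.single k 1))

lemma integrable_and_integral_exactDiv {w : E → E} {φ : E → ℝ} (hw : ContDiff ℝ 1 w)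
    (hφ : ContDiff ℝ 1 φ) (hφc : HasCompactSupport φ) (k : Fin d) :
    Integrable (exactDiv w φ k) ∧ ∫ x, exactDiv w φ k x = 0 := by
  have hS : ∀ i k j, Integrable fun x =>
      fderiv ℝ (fun y => φ y * (w y i * w y k)) x (EuclideanSpace.single j 1) :=
    fun i k j => integrable_fderiv_apply (contDiff_flux hφ hw i k) hφc.mul_right _
  have hS' : ∀ j, Integrable fun x =>
      fderiv ℝ (fun y => φ y * (w y j * w y k)) x (EuclideanSpace.single j 1)
      + 1 / 2 * fderiv ℝ (fun y => φ y * (w y j * w y j)) x (EuclideanSpace.single k 1) :=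
    fun j => (hS j k j).add ((hS j j k).const_mul _)
  refine ⟨integrable_finsetSum _ fun j _ => hS' j, ?_⟩
  simp only [exactDiv]
  rw [integral_finsetSum _ fun j _ => hS' j]
  refine Finset.sum_eq_zero fun j _ => ?_
  rw [integral_add (hS j k j) ((hS j j k).const_mul _), integral_const_mul,
    integral_fderiv_apply_eq_zero (contDiff_flux hφ hw j k) hφc.mul_right,
    integral_fderiv_apply_eq_zero (contDiff_flux hφ hw j j) hφc.mul_right]
  simp

/-- The pointwise form of the balance: tested against `φ eₖ`, the EMAC integrand is the `k`-th
component of `φ a` (with `a` in the role of `∂ₜu`) minus the right-hand side of the balance, up to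
an exact divergence. No condition on `div w` enters. -/
lemma emac_integrand_eq (ν : ℝ) {w : E → E} (q : E → ℝ) {φ : E → ℝ} (hw : ContDiff ℝ 1 w)
    (hφ : ContDiff ℝ 1 φ) (a : E) (k : Fin d) (x : E) :
    dotp a (φ x • EuclideanSpace.single k (1 : ℝ))
      + 2 * dotp (matVec (defT w x) (w x)) (φ x • EuclideanSpace.single k (1 : ℝ))
      + dvg w x * dotp (w x) (φ x • EuclideanSpace.single k (1 : ℝ))
      + 2 * ν * frob (defT w x) (defT (fun y => φ y • EuclideanSpace.single k (1 : ℝ)) x)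
      - q x * dvg (fun y => φ y • EuclideanSpace.single k (1 : ℝ)) x
      = (φ x • a) k - balanceFlux ν w q φ x k + exactDiv w φ k x := by
  have hn : ‖w x‖ ^ 2 = ∑ j, w x j * w x j := by
    rw [EuclideanSpace.real_norm_sq_eq]
    exact Finset.sum_congr rfl fun j _ => sq _
  have hD : ∀ j, defT w x k j = 1 / 2 * (jac w x k j + jac w x j k) := fun j => rfl
  have hdiv : dvg w x = ∑ j, jac w x j j := rfl
  have hS : exactDiv w φ k x = φ x * (2 * ∑ j, defT w x k j * w x j)
      + φ x * (dvg w x * w x k) + (∑ j, w x j * grd φ x j) * w x k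
      + 1 / 2 * (∑ j, w x j * w x j) * grd φ x k := by
    simp only [exactDiv, fderiv_flux hφ hw, hdiv, hD, Finset.mul_sum, Finset.sum_mul,
      ← Finset.sum_add_distrib]
    exact Finset.sum_congr rfl fun j _ => by ring
  rw [dotp_smul_single, dotp_smul_single, dotp_smul_single, frob_defT_smul_single hφ,
    dvg_smul_single hφ, hS, balanceFlux_apply, hn, matVec_apply, matVec_apply, PiLp.smul_apply,
    smul_eq_mul]
  ring

/-- Differentiation under the integral sign for `∫ φ u`; it is legitimate because `∂ₜu` is bounded
on the compact set `[t - 1, t + 1] × supp φ`. -/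
lemma hasDerivAt_integral_smul {u : ℝ → E → E} {φ : E → ℝ}
    (hu : ContDiff ℝ 1 (Function.uncurry u)) (hφ : Continuous φ) (hφc : HasCompactSupport φ)
    (t : ℝ) :
    Integrable (fun x => φ x • deriv (fun s => u s x) t) ∧
    HasDerivAt (fun s => ∫ x, φ x • u s x) (∫ x, φ x • deriv (fun s => u s x) t) t := by
  have hd : ∀ s x, HasDerivAt (fun s => u s x)
      (fderiv ℝ (Function.uncurry u) (s, x) ((1 : ℝ), (0 : E))) s := by
    intro s x
    have h1 : HasDerivAt (fun s : ℝ => (s, x)) ((1 : ℝ), (0 : E)) s :=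
      (hasDerivAt_id s).prodMk (hasDerivAt_const s x)
    exact ((hu.differentiable one_ne_zero) (s, x)).hasFDerivAt.comp_hasDerivAt s h1
  have hd' : ∀ s x, deriv (fun s => u s x) s
      = fderiv ℝ (Function.uncurry u) (s, x) ((1 : ℝ), (0 : E)) := fun s x => (hd s x).deriv
  have hc : Continuous fun p : ℝ × E =>
      fderiv ℝ (Function.uncurry u) p ((1 : ℝ), (0 : E)) :=
    (hu.continuous_fderiv one_ne_zero).clm_apply continuous_const
  have hcu : ∀ s, Continuous (u s) := fun s => hu.continuous.comp (by fun_prop : Continuous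
    fun x : E => (s, x))
  obtain ⟨C, hC⟩ := ((isCompact_Icc (a := t - 1) (b := t + 1)).prod hφc).exists_bound_of_continuousOn
    hc.continuousOn
  simp only [hd']
  refine hasDerivAt_integral_of_dominated_loc_of_deriv_le (s := Set.Icc (t - 1) (t + 1))
    (F := fun s x => φ x • u s x)
    (F' := fun s x => φ x • fderiv ℝ (Function.uncurry u) (s, x) ((1 : ℝ), (0 : E)))
    (bound := fun x => ‖φ x‖ * C) (Icc_mem_nhds (by linarith) (by linarith)) ?_ ?_ ?_ ?_ ?_ ?_
  · exact Eventually.of_forall fun s => (hφ.smul (hcu s)).aestronglyMeasurable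
  · exact (hφ.smul (hcu t)).integrable_of_hasCompactSupport hφc.smul_right
  · exact (hφ.smul (hc.comp (by fun_prop : Continuous
      fun x : E => (t, x)))).aestronglyMeasurable
  · refine Eventually.of_forall fun x s hs => ?_
    rw [norm_smul]
    by_cases hx : x ∈ tsupport φ
    · exact mul_le_mul_of_nonneg_left (hC (s, x) ⟨hs, hx⟩) (norm_nonneg _)
    · simp [image_eq_zero_of_notMem_tsupport hx]
  · exact (hφ.integrable_of_hasCompactSupport hφc).norm.mul_const C
  · exact Eventually.of_forall fun x s _ => (hd s x).const_smul (φ x)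

end helpers

/-- If the EMAC variational identity holds at every time when tested against
all fields `v = φ c` with `c` a constant vector, then with `p = p̂ + ½‖u‖²` the weak
(diffuse-volume) Eulerian local momentum balance holds:
`d/dt ∫ φ u dx = ∫ [−2ν D(u)∇φ + p ∇φ + (u·∇φ) u] dx`. -/
theorem emac_weak_eulerian_momentum (d : ℕ) (hd : 1 ≤ d) (ν : ℝ) (hν : 0 ≤ ν)
    (u : ℝ → EuclideanSpace ℝ (Fin d) → EuclideanSpace ℝ (Fin d))
    (phat : ℝ → EuclideanSpace ℝ (Fin d) → ℝ)
    (φ : EuclideanSpace ℝ (Fin d) → ℝ)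
    (hu : ContDiff ℝ 1 (Function.uncurry u))
    (hphat : Continuous (Function.uncurry phat))
    (hφ : ContDiff ℝ 1 φ) (hφc : HasCompactSupport φ)
    (hEMAC : ∀ (t : ℝ) (c : EuclideanSpace ℝ (Fin d)),
      (∫ x, (dotp (deriv (fun s => u s x) t) (φ x • c)
        + 2 * dotp (matVec (defT (u t) x) (u t x)) (φ x • c)
        + dvg (u t) x * dotp (u t x) (φ x • c)
        + 2 * ν * frob (defT (u t) x) (defT (fun y => φ y • c) x)
        - phat t x * dvg (fun y => φ y • c) x)) = 0) :
    ∀ t : ℝ,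
      HasDerivAt (fun s => ∫ x, φ x • u s x)
        (∫ x, ((-(2 * ν)) • matVec (defT (u t) x) (grd φ x)
          + (phat t x + (1/2) * ‖u t x‖ ^ 2) • grd φ x
          + dotp (u t x) (grd φ x) • u t x)) t := by
  intro t
  obtain ⟨hRint, hder⟩ := hasDerivAt_integral_smul hu hφ.continuous hφc t
  have hw : ContDiff ℝ 1 (u t) := hu.comp (contDiff_prodMk_right t)
  have hpt : Continuous (phat t) := hphat.comp (by fun_prop : Continuous
    fun x : EuclideanSpace ℝ (Fin d) => (t, x))
  have hTint := integrable_balanceFlux ν hw hpt hφ hφc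
  have key : ∫ x, φ x • deriv (fun s => u s x) t = ∫ x, balanceFlux ν (u t) (phat t) φ x := by
    ext k
    let P : EuclideanSpace ℝ (Fin d) →L[ℝ] ℝ := EuclideanSpace.proj k
    have hR := P.integral_comp_comm hRint
    have hT := P.integral_comp_comm hTint
    have hRi := P.integrable_comp hRint
    have hTi := P.integrable_comp hTint
    have hRTi : Integrable fun x => P (φ x • deriv (fun s => u s x) t)
        - P (balanceFlux ν (u t) (phat t) φ x) := hRi.sub hTi
    obtain ⟨hSi, hS0⟩ := integrable_and_integral_exactDiv hw hφ hφc k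
    have hE := hEMAC t (EuclideanSpace.single k 1)
    have hE' : ∫ x, (P (φ x • deriv (fun s => u s x) t)
        - P (balanceFlux ν (u t) (phat t) φ x) + exactDiv (u t) φ k x) = 0 :=
      (integral_congr_ae (Eventually.of_forall fun x =>
        (emac_integrand_eq ν (phat t) hw hφ (deriv (fun s => u s x) t) k x).symm)).trans hE
    rw [integral_add hRTi hSi, integral_sub hRi hTi, hS0, hR, hT, add_zero] at hE'
    exact sub_eq_zero.mp hE'
  change HasDerivAt _ (∫ x, balanceFlux ν (u t) (phat t) φ x) t
  rw [← key]
  exact hder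

end
end

section
/- Let d ≥ 1, let u : ℝ^d → ℝ^d be C¹, let φ : ℝ^d → ℝ be C¹ with compact support, and let c ∈ ℝ^d be a constant vector. Then ∫_{ℝ^d} 2 (D(u)u)·c φ dx = − ∫_{ℝ^d} (u·∇φ)(u·c) dx − ∫_{ℝ^d} (div u)(u·c) φ dx − ½ ∫_{ℝ^d} (c·∇φ) ‖u‖² dx. -/
/-!
The term `2 D(u)u · c` splits as `(∇u)u · c + (∇u)ᵀu · c`. The second summand is the directional
derivative `½ ∂_c ‖u‖²`, and with `w = u · c` the first is `∑ⱼ uⱼ ∂ⱼw = ∑ⱼ ∂ⱼ(uⱼ w) - (div u) w`.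
So, up to the term `(div u) w`, the integrand is a sum of derivatives of `C¹` functions multiplied
by the compactly supported `φ`, and each derivative is moved to `φ` by `integral_fderiv_mul_test`.
Every integrand is continuous with compact support, which gives all the integrability needed.
-/

open MeasureTheory Real Set Filter Matrix

noncomputable section

theorem integrable_mul_test {d : ℕ} {f φ : EuclideanSpace ℝ (Fin d) → ℝ}
    (hf : Continuous f) (hφ : Continuous φ) (hφc : HasCompactSupport φ) :
    Integrable (fun x => f x * φ x) :=
  (hf.mul hφ).integrable_of_hasCompactSupport hφc.mul_left

/-- Integration by parts in the direction `v` against a compactly supported `φ`; no decay of `f`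
is needed, since all three products in the Mathlib statement inherit the support of `φ`. -/
theorem integral_fderiv_mul_test {d : ℕ} {f φ : EuclideanSpace ℝ (Fin d) → ℝ}
    (hf : ContDiff ℝ 1 f) (hφ : ContDiff ℝ 1 φ) (hφc : HasCompactSupport φ)
    (v : EuclideanSpace ℝ (Fin d)) :
    ∫ x, fderiv ℝ f x v * φ x = -∫ x, f x * fderiv ℝ φ x v := by
  rw [integral_mul_fderiv_eq_neg_fderiv_mul_of_integrable, neg_neg]
  · exact integrable_mul_test (hf.continuous_fderiv_apply one_ne_zero |>.comp
      (continuous_id.prodMk continuous_const)) hφ.continuous hφc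
  · exact integrable_mul_test hf.continuous (hφ.continuous_fderiv_apply one_ne_zero |>.comp
      (continuous_id.prodMk continuous_const)) (hφc.fderiv_apply ℝ v)
  · exact integrable_mul_test hf.continuous hφ.continuous hφc
  · exact fun x _ => hf.differentiable one_ne_zero x
  · exact fun x _ => hφ.differentiable one_ne_zero x

theorem fderiv_eq_sum_single {d : ℕ} {F : Type*} [NormedAddCommGroup F] [NormedSpace ℝ F]
    (L : EuclideanSpace ℝ (Fin d) →L[ℝ] F) (v : EuclideanSpace ℝ (Fin d)) :
    L v = ∑ i, v i • L (EuclideanSpace.single i 1) := by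
  conv_lhs => rw [← (EuclideanSpace.basisFun (Fin d) ℝ).sum_repr v]
  simp

theorem hasFDerivAt_coord {d : ℕ} {u : EuclideanSpace ℝ (Fin d) → EuclideanSpace ℝ (Fin d)}
    {x : EuclideanSpace ℝ (Fin d)} (hu : DifferentiableAt ℝ u x) (i : Fin d) :
    HasFDerivAt (fun y => u y i) ((EuclideanSpace.proj i : _ →L[ℝ] ℝ).comp (fderiv ℝ u x)) x :=
  (EuclideanSpace.proj i : EuclideanSpace ℝ (Fin d) →L[ℝ] ℝ).hasFDerivAt.comp x hu.hasFDerivAt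

theorem fderiv_coord_mul_dotp {d : ℕ}
    {u : EuclideanSpace ℝ (Fin d) → EuclideanSpace ℝ (Fin d)}
    {x : EuclideanSpace ℝ (Fin d)} (hu : DifferentiableAt ℝ u x)
    (c v : EuclideanSpace ℝ (Fin d)) (j : Fin d) :
    fderiv ℝ (fun y => u y j * dotp (u y) c) x v
      = u x j * dotp (fderiv ℝ u x v) c + fderiv ℝ u x v j * dotp (u x) c := by
  have hw : HasFDerivAt (fun y => dotp (u y) c) _ x :=
    HasFDerivAt.fun_sum (u := Finset.univ)
      fun i _ => (hasFDerivAt_coord hu i).mul_const (c i)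
  rw [((hasFDerivAt_coord hu j).fun_mul hw).fderiv]
  simp [dotp, mul_comm]

theorem fderiv_norm_sq_field {d : ℕ}
    {u : EuclideanSpace ℝ (Fin d) → EuclideanSpace ℝ (Fin d)}
    {x : EuclideanSpace ℝ (Fin d)} (hu : DifferentiableAt ℝ u x)
    (v : EuclideanSpace ℝ (Fin d)) :
    fderiv ℝ (fun y => ‖u y‖ ^ 2) x v = 2 * dotp (u x) (fderiv ℝ u x v) := by
  rw [hu.hasFDerivAt.norm_sq.fderiv]
  simp [dotp, PiLp.inner_apply, mul_comm]

theorem dotp_grd {d : ℕ} (φ : EuclideanSpace ℝ (Fin d) → ℝ) (v x : EuclideanSpace ℝ (Fin d)) :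
    dotp v (grd φ x) = fderiv ℝ φ x v := by
  rw [fderiv_eq_sum_single (fderiv ℝ φ x) v]
  simp [dotp, grd]

/-- The pointwise identity
`2 D(u)u · c = ∑ⱼ ∂ⱼ(uⱼ (u · c)) - (div u)(u · c) + ½ ∂_c ‖u‖²`. -/
theorem two_mul_dotp_defT {d : ℕ}
    {u : EuclideanSpace ℝ (Fin d) → EuclideanSpace ℝ (Fin d)}
    {x : EuclideanSpace ℝ (Fin d)} (hu : DifferentiableAt ℝ u x)
    (c : EuclideanSpace ℝ (Fin d)) :
    2 * dotp (matVec (defT u x) (u x)) c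
      = (∑ j, fderiv ℝ (fun y => u y j * dotp (u y) c) x (EuclideanSpace.single j 1))
        - dvg u x * dotp (u x) c
        + (1/2) * fderiv ℝ (fun y => ‖u y‖ ^ 2) x c := by
  simp only [fderiv_coord_mul_dotp hu, fderiv_norm_sq_field hu]
  have h1 : dotp (matVec (defT u x) (u x)) c
      = (1/2) * (∑ i, ∑ j, jac u x i j * u x j * c i)
        + (1/2) * ∑ i, ∑ j, jac u x j i * u x j * c i := by
    have hentry (i : Fin d) : matVec (defT u x) (u x) i = ∑ j, defT u x i j * u x j := rfl
    simp only [dotp, hentry, Finset.mul_sum, Finset.sum_mul, ← Finset.sum_add_distrib]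
    refine Finset.sum_congr rfl fun i _ => Finset.sum_congr rfl fun j _ => ?_
    simp only [defT, Matrix.smul_apply, Matrix.add_apply, Matrix.transpose_apply, smul_eq_mul]
    ring
  have h2 : ∑ i, ∑ j, jac u x i j * u x j * c i
      = ∑ j, u x j * dotp (fderiv ℝ u x (EuclideanSpace.single j 1)) c := by
    rw [Finset.sum_comm]
    simp only [dotp, jac, Finset.mul_sum]
    refine Finset.sum_congr rfl fun i _ => Finset.sum_congr rfl fun j _ => ?_
    ring
  have h3 : ∑ i, ∑ j, jac u x j i * u x j * c i = dotp (u x) (fderiv ℝ u x c) := by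
    rw [fderiv_eq_sum_single (fderiv ℝ u x) c, Finset.sum_comm]
    simp only [dotp, jac, WithLp.ofLp_sum, Finset.sum_apply, WithLp.ofLp_smul, Pi.smul_apply,
      smul_eq_mul, Finset.mul_sum]
    refine Finset.sum_congr rfl fun i _ => Finset.sum_congr rfl fun j _ => ?_
    ring
  rw [h1, h2, h3, Finset.sum_add_distrib, ← Finset.sum_mul]
  simp only [dvg, Matrix.trace, Matrix.diag, jac]
  ring

/-- Integration-by-parts identity for the EMAC nonlinear term tested
against `φ c`: for `u` of class `C¹`, `φ` of class `C¹` with compact support, and a constant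
vector `c`, `∫ 2(D(u)u)·c φ = −∫ (u·∇φ)(u·c) − ∫ (div u)(u·c) φ − ½ ∫ (c·∇φ)‖u‖²`. -/
theorem emac_nonlinearity_integration_by_parts (d : ℕ) (hd : 1 ≤ d)
    (u : EuclideanSpace ℝ (Fin d) → EuclideanSpace ℝ (Fin d))
    (φ : EuclideanSpace ℝ (Fin d) → ℝ) (c : EuclideanSpace ℝ (Fin d))
    (hu : ContDiff ℝ 1 u) (hφ : ContDiff ℝ 1 φ) (hφc : HasCompactSupport φ) :
    (∫ x, 2 * dotp (matVec (defT u x) (u x)) c * φ x)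
      = -(∫ x, dotp (u x) (grd φ x) * dotp (u x) c)
        - (∫ x, dvg u x * dotp (u x) c * φ x)
        - (1/2) * ∫ x, dotp c (grd φ x) * ‖u x‖ ^ 2 := by
  have hcoord (j : Fin d) : ContDiff ℝ 1 fun x => u x j :=
    (EuclideanSpace.proj j : EuclideanSpace ℝ (Fin d) →L[ℝ] ℝ).contDiff.comp hu
  have hw : ContDiff ℝ 1 fun x => dotp (u x) c :=
    ContDiff.sum fun i _ => (hcoord i).mul contDiff_const
  have hF (j : Fin d) : ContDiff ℝ 1 fun x => u x j * dotp (u x) c := (hcoord j).mul hw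
  have hN : ContDiff ℝ 1 fun x => ‖u x‖ ^ 2 := hu.norm_sq ℝ
  have hD {F : Type} [NormedAddCommGroup F] [NormedSpace ℝ F]
      {f : EuclideanSpace ℝ (Fin d) → F} (hf : ContDiff ℝ 1 f)
      (v : EuclideanSpace ℝ (Fin d)) : Continuous fun x => fderiv ℝ f x v :=
    (hf.continuous_fderiv one_ne_zero).clm_apply continuous_const
  have hdvg : Continuous fun x => dvg u x :=
    continuous_finsetSum Finset.univ fun j _ =>
      (EuclideanSpace.proj j : EuclideanSpace ℝ (Fin d) →L[ℝ] ℝ).continuous.comp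
        (hD hu (EuclideanSpace.single j 1))
  have iF (j : Fin d) := integrable_mul_test (hD (hF j) (EuclideanSpace.single j 1))
    hφ.continuous hφc
  have iN := integrable_mul_test (hD hN c) hφ.continuous hφc
  have iV : Integrable fun x => dvg u x * dotp (u x) c * φ x :=
    integrable_mul_test (hdvg.mul hw.continuous) hφ.continuous hφc
  have iG (j : Fin d) := integrable_mul_test (hF j).continuous
    (hD hφ (EuclideanSpace.single j 1)) (hφc.fderiv_apply ℝ (EuclideanSpace.single j 1))
  have iS : Integrable fun x => ∑ j,
      fderiv ℝ (fun y => u y j * dotp (u y) c) x (EuclideanSpace.single j 1) * φ x :=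
    integrable_finsetSum _ fun j _ => iF j
  have hL (x : EuclideanSpace ℝ (Fin d)) : 2 * dotp (matVec (defT u x) (u x)) c * φ x
      = (∑ j, fderiv ℝ (fun y => u y j * dotp (u y) c) x (EuclideanSpace.single j 1) * φ x)
        - dvg u x * dotp (u x) c * φ x
        + (1/2) * (fderiv ℝ (fun y => ‖u y‖ ^ 2) x c * φ x) := by
    rw [two_mul_dotp_defT (hu.differentiable one_ne_zero x), ← Finset.sum_mul]
    ring
  have hR (x : EuclideanSpace ℝ (Fin d)) : dotp (u x) (grd φ x) * dotp (u x) c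
      = ∑ j, u x j * dotp (u x) c * fderiv ℝ φ x (EuclideanSpace.single j 1) := by
    rw [dotp_grd, fderiv_eq_sum_single (fderiv ℝ φ x) (u x), Finset.sum_mul]
    refine Finset.sum_congr rfl fun j _ => ?_
    rw [smul_eq_mul]
    ring
  have hS (x : EuclideanSpace ℝ (Fin d)) :
      dotp c (grd φ x) * ‖u x‖ ^ 2 = ‖u x‖ ^ 2 * fderiv ℝ φ x c := by
    rw [dotp_grd, mul_comm]
  simp only [hL, hR, hS]
  rw [integral_add (iS.sub' iV) (iN.const_mul _), integral_sub iS iV,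
    integral_finsetSum _ fun j _ => iF j, integral_const_mul,
    integral_finsetSum _ fun j _ => iG j, integral_fderiv_mul_test hN hφ hφc c]
  simp only [integral_fderiv_mul_test (hF _) hφ hφc, Finset.sum_neg_distrib]
  ring

end
end
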